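/- arXiv:1710.02659 — 2 statements merged into one kernel-verified Lean document; each statement's English description precedes it below -/
import Mathlib

section
/- (Result 1, Perfect Interference Ball Model, abstract form.) Let (X_n)_{n∈ℕ} be a sequence of real-valued measurable functions on a probability space that is antitone in n pointwise (X_{n+1}(ω) ≤ X_n(ω) for all ω) and converges pointwise to a measurable function Y. Let β be a real number with 0 < P[Y < β] < 1. Then for every ξ ∈ [0,1], the similarity index S_{β,ξ}(X_n‖Y) converges to 1 as n → ∞. (In the paper: as the interference-ball radius r_IBM → ∞, the SINR of the interference ball model decreases to the SINR of the physical model, and the accuracy index of the interference ball model tends to 1.) -/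
open MeasureTheory ProbabilityTheory Filter

/-- False-alarm probability `p_fa = P[X < β | Y ≥ β]`. -/
noncomputable def pfa {Ω : Type*} [MeasurableSpace Ω] (P : Measure Ω)
    (X Y : Ω → ℝ) (β : ℝ) : ℝ :=
  (P[|{ω | β ≤ Y ω}] {ω | X ω < β}).toReal

/-- Miss-detection probability `p_md = P[X ≥ β | Y < β]`. -/
noncomputable def pmd {Ω : Type*} [MeasurableSpace Ω] (P : Measure Ω)
    (X Y : Ω → ℝ) (β : ℝ) : ℝ :=
  (P[|{ω | Y ω < β}] {ω | β ≤ X ω}).toReal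

/-- Interference model similarity index `S_{β,ξ}(X‖Y) = 1 − ξ·p_fa − (1−ξ)·p_md`. -/
noncomputable def simIndex {Ω : Type*} [MeasurableSpace Ω] (P : Measure Ω)
    (X Y : Ω → ℝ) (β ξ : ℝ) : ℝ :=
  1 - ξ * pfa P X Y β - (1 - ξ) * pmd P X Y β

/-- Result 1 (Perfect Interference Ball Model, abstract form): if `X n` decreases
pointwise to `Y`, then for every `ξ ∈ [0,1]` the similarity index `S_{β,ξ}(X n‖Y) → 1`. -/
theorem simIndex_tendsto_one_of_antitone_tendsto
    {Ω : Type*} [MeasurableSpace Ω] (P : Measure Ω) [IsProbabilityMeasure P]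
    (X : ℕ → Ω → ℝ) (Y : Ω → ℝ)
    (hX : ∀ n, Measurable (X n)) (hY : Measurable Y)
    (hanti : ∀ ω, Antitone fun n => X n ω)
    (hconv : ∀ ω, Tendsto (fun n => X n ω) atTop (nhds (Y ω)))
    (β : ℝ) (h0 : 0 < P {ω | Y ω < β}) (h1 : P {ω | Y ω < β} < 1) :
    ∀ ξ ∈ Set.Icc (0 : ℝ) 1,
      Tendsto (fun n => simIndex P (X n) Y β ξ) atTop (nhds 1) := by
  intro ξ _
  have hmY : MeasurableSet {ω | Y ω < β} := measurableSet_lt hY measurable_const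
  have hmY' : MeasurableSet {ω | β ≤ Y ω} := measurableSet_le measurable_const hY
  have hle : ∀ n ω, Y ω ≤ X n ω := fun n ω => (hanti ω).le_of_tendsto (hconv ω) n
  have hfa : ∀ n, pfa P (X n) Y β = 0 := by
    intro n
    have he : {ω | β ≤ Y ω} ∩ {ω | X n ω < β} = ∅ := by
      ext ω
      simp only [Set.mem_inter_iff, Set.mem_setOf_eq, Set.mem_empty_iff_false, iff_false,
        not_and, not_lt]
      intro h
      exact h.trans (hle n ω)
    simp [pfa, cond_apply hmY', he]
  have hmd : Tendsto (fun n => pmd P (X n) Y β) atTop (nhds 0) := by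
    have ht : Tendsto (fun n => P[|{ω | Y ω < β}] {ω | β ≤ X n ω}) atTop
        (nhds (P[|{ω | Y ω < β}] (⋂ n, {ω | β ≤ X n ω}))) := by
      apply tendsto_measure_iInter_atTop
      · intro n
        exact (measurableSet_le measurable_const (hX n)).nullMeasurableSet
      · intro m n hmn ω hω
        exact le_trans hω (hanti ω hmn)
      · exact ⟨0, measure_ne_top _ _⟩
    have hz : P[|{ω | Y ω < β}] (⋂ n, {ω | β ≤ X n ω}) = 0 := by
      have he : {ω | Y ω < β} ∩ (⋂ n, {ω | β ≤ X n ω}) = ∅ := by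
        ext ω
        simp only [Set.mem_inter_iff, Set.mem_setOf_eq, Set.mem_iInter,
          Set.mem_empty_iff_false, iff_false, not_and]
        intro h hall
        exact absurd (ge_of_tendsto' (hconv ω) hall) (not_le.mpr h)
      simp [cond_apply hmY, he]
    rw [hz] at ht
    have := (ENNReal.tendsto_toReal ENNReal.zero_ne_top).comp ht
    simpa [pmd, Function.comp_def] using this
  have := (hmd.const_mul (1 - ξ)).const_sub 1
  simpa [simIndex, hfa] using this
end

section
/- (Proposition 2, bounds on the accuracy of the protocol model.) Let X and Y be real-valued random variables on a probability space (Ω, ℱ, P) and β a real number such that almost surely X < β implies Y < β (this holds for the protocol model with interference range r_PRM ≤ ζ^{−1/α} relative to the physical model, by Result 7), and 0 < P[Y < β] < 1. Set ξ = P[Y ≥ β]. Then max(P[X < β], P[Y ≥ β]) ≤ S_{β,ξ}(X‖Y) ≤ 1. -/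
open MeasureTheory ProbabilityTheory

/-- Proposition 2 (bounds on the accuracy of the protocol model): if almost surely
`X < β → Y < β` and `0 < P[Y < β] < 1`, then with `ξ = P[Y ≥ β]`,
`max(P[X < β], P[Y ≥ β]) ≤ S_{β,ξ}(X‖Y) ≤ 1`. -/
theorem simIndex_bounds_of_ae_outage_subset
    {Ω : Type*} [MeasurableSpace Ω] (P : Measure Ω) [IsProbabilityMeasure P]
    (X Y : Ω → ℝ) (hX : Measurable X) (hY : Measurable Y) (β : ℝ)
    (hsub : ∀ᵐ ω ∂P, X ω < β → Y ω < β)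
    (h0 : 0 < P {ω | Y ω < β}) (h1 : P {ω | Y ω < β} < 1)
    (ξ : ℝ) (hξ : ξ = (P {ω | β ≤ Y ω}).toReal) :
    max (P {ω | X ω < β}).toReal (P {ω | β ≤ Y ω}).toReal ≤ simIndex P X Y β ξ ∧
    simIndex P X Y β ξ ≤ 1 := by
  have mX : MeasurableSet {ω | X ω < β} := measurableSet_lt hX measurable_const
  have mY : MeasurableSet {ω | Y ω < β} := measurableSet_lt hY measurable_const
  have mY' : MeasurableSet {ω | β ≤ Y ω} := measurableSet_le measurable_const hY
  have cX : {ω | β ≤ X ω} = {ω | X ω < β}ᶜ := by ext ω; simp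
  have cY : {ω | β ≤ Y ω} = {ω | Y ω < β}ᶜ := by ext ω; simp
  have hfa : pfa P X Y β = 0 := by
    have hz : P ({ω | β ≤ Y ω} ∩ {ω | X ω < β}) = 0 := by
      rw [← nonpos_iff_eq_zero, ← ae_iff.mp hsub]
      apply measure_mono
      rintro ω ⟨h1, h2⟩
      simp only [Set.mem_setOf_eq] at h1 h2 ⊢
      exact fun h => absurd (h h2) (not_lt.mpr h1)
    unfold pfa
    rw [cond_apply mY', hz]
    simp
  have pX : P.real {ω | β ≤ X ω} = 1 - P.real {ω | X ω < β} := by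
    rw [cX, probReal_compl_eq_one_sub mX]
  have pY : P.real {ω | β ≤ Y ω} = 1 - P.real {ω | Y ω < β} := by
    rw [cY, probReal_compl_eq_one_sub mY]
  have hpos : 0 < P.real {ω | Y ω < β} :=
    ENNReal.toReal_pos h0.ne' (measure_ne_top _ _)
  have hmd : (1 - ξ) * pmd P X Y β = P.real ({ω | Y ω < β} ∩ {ω | β ≤ X ω}) := by
    have e : 1 - ξ = P.real {ω | Y ω < β} := by
      rw [hξ]
      change 1 - P.real {ω | β ≤ Y ω} = _
      rw [pY]; ring
    unfold pmd
    rw [e, cond_apply mY, ENNReal.toReal_mul, ENNReal.toReal_inv]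
    change P.real {ω | Y ω < β} * ((P.real {ω | Y ω < β})⁻¹ *
      P.real ({ω | Y ω < β} ∩ {ω | β ≤ X ω})) = _
    field_simp
  have l1 : P.real ({ω | Y ω < β} ∩ {ω | β ≤ X ω}) ≤ P.real {ω | Y ω < β} :=
    measureReal_mono Set.inter_subset_left
  have l2 : P.real ({ω | Y ω < β} ∩ {ω | β ≤ X ω}) ≤ P.real {ω | β ≤ X ω} :=
    measureReal_mono Set.inter_subset_right
  have l0 : 0 ≤ P.real ({ω | Y ω < β} ∩ {ω | β ≤ X ω}) := measureReal_nonneg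
  unfold simIndex
  rw [hfa, hmd]
  change max (P.real {ω | X ω < β}) (P.real {ω | β ≤ Y ω}) ≤ _ ∧ _
  refine ⟨max_le ?_ ?_, ?_⟩ <;> linarith
end
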